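/- arXiv:2503.08066 — 4 statements merged into one kernel-verified Lean document; each statement's English description precedes it below -/
import Mathlib

section
/- Let P be a symmetric positive definite real n×n matrix, M a real n×n matrix, D a real n×σ matrix, and π > 0, κ > 0 real numbers. Assume the matrix inequality M·P⁻¹ + P⁻¹·Mᵀ + π·I_n ⪯ −κ·P⁻¹, meaning that the symmetric matrix −κ·P⁻¹ − (M·P⁻¹ + P⁻¹·Mᵀ + π·I_n) is positive semidefinite. Then for all x ∈ ℝⁿ and all w ∈ ℝ^σ: 2·⟨P·x, M·x + D·w⟩ ≤ −κ·⟨x, P·x⟩ + (‖D‖²/π)·‖w‖². -/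
/-! With `y = P x`, evaluating the quadratic form of the matrix inequality at `y` gives
`2⟨y, M x⟩ + pi ‖y‖² ≤ -κ ⟨x, y⟩`, because `P⁻¹ y = x`. The disturbance term is bounded by
Cauchy–Schwarz and Young's inequality: `2⟨y, D w⟩ ≤ pi ‖y‖² + (‖D‖² / pi) ‖w‖²`. Adding the two
cancels `pi ‖y‖²`. -/

open RealInnerProductSpace Matrix

/-- The operator norm of a rectangular real matrix with respect to Euclidean norms. -/
noncomputable def euclideanOpNorm {n σ : ℕ} (D : Matrix (Fin n) (Fin σ) ℝ) : ℝ :=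
  ‖(LinearMap.toContinuousLinearMap (Matrix.toEuclideanLin D))‖

/-- ISS dissipation inequality from the matrix inequality: if `P` is symmetric
positive definite and `M P⁻¹ + P⁻¹ Mᵀ + pi·I ⪯ −κ·P⁻¹`, then for all `x, w`,
`2⟨Px, Mx + Dw⟩ ≤ −κ⟨x, Px⟩ + (‖D‖²/pi)‖w‖²`. -/
theorem iss_dissipation_from_matrix_inequality
    {n σ : ℕ}
    (P M : Matrix (Fin n) (Fin n) ℝ) (D : Matrix (Fin n) (Fin σ) ℝ)
    (hP : P.PosDef) (pi κ : ℝ) (hpi : 0 < pi) (hκ : 0 < κ)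
    (hLMI : (-(κ • P⁻¹) -
      (M * P⁻¹ + P⁻¹ * Mᵀ + pi • (1 : Matrix (Fin n) (Fin n) ℝ))).PosSemidef) :
    ∀ (x : EuclideanSpace ℝ (Fin n)) (w : EuclideanSpace ℝ (Fin σ)),
      2 * ⟪Matrix.toEuclideanLin P x,
            Matrix.toEuclideanLin M x + Matrix.toEuclideanLin D w⟫ ≤
        -κ * ⟪x, Matrix.toEuclideanLin P x⟫
          + euclideanOpNorm D ^ 2 / pi * ‖w‖ ^ 2 := by
  intro x w
  set y := Matrix.toEuclideanLin P x with hy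
  have hdet : IsUnit P.det := hP.det_pos.ne'.isUnit
  have hyx : P⁻¹ *ᵥ y.ofLp = x.ofLp := by
    simp [hy, Matrix.toLpLin_apply, Matrix.mulVec_mulVec, Matrix.nonsing_inv_mul P hdet]
  have hinvT : (P⁻¹)ᵀ = P⁻¹ := by
    simpa [Matrix.IsHermitian, Matrix.conjTranspose_eq_transpose_of_trivial]
      using hP.inv.isHermitian
  have hyx' : y.ofLp ᵥ* P⁻¹ = x.ofLp := by
    rw [← Matrix.mulVec_transpose, hinvT, hyx]
  -- The quadratic form of the matrix inequality at `y = P x`.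
  have hform : 2 * ⟪y, Matrix.toEuclideanLin M x⟫ + pi * ‖y‖ ^ 2 ≤ -κ * ⟪x, y⟫ := by
    have h := hLMI.dotProduct_mulVec_nonneg y.ofLp
    have e1 : y.ofLp ⬝ᵥ (P⁻¹ *ᵥ (Mᵀ *ᵥ y.ofLp)) = y.ofLp ⬝ᵥ (M *ᵥ x.ofLp) := by
      rw [Matrix.dotProduct_mulVec, hyx', Matrix.dotProduct_mulVec, Matrix.vecMul_transpose,
        dotProduct_comm]
    have e2 : ⟪y, Matrix.toEuclideanLin M x⟫ = y.ofLp ⬝ᵥ (M *ᵥ x.ofLp) := by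
      simp [EuclideanSpace.inner_eq_star_dotProduct, Matrix.toLpLin_apply, dotProduct_comm]
    have e3 : ⟪x, y⟫ = y.ofLp ⬝ᵥ x.ofLp := by
      simp [EuclideanSpace.inner_eq_star_dotProduct]
    have e4 : ‖y‖ ^ 2 = y.ofLp ⬝ᵥ y.ofLp := by
      rw [← real_inner_self_eq_norm_sq, EuclideanSpace.inner_eq_star_dotProduct, star_trivial]
    simp only [star_trivial, Matrix.sub_mulVec, Matrix.neg_mulVec, Matrix.add_mulVec,
      Matrix.smul_mulVec, Matrix.one_mulVec, ← Matrix.mulVec_mulVec, dotProduct_sub,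
      dotProduct_neg, dotProduct_add, dotProduct_smul, smul_eq_mul, e1, hyx] at h
    rw [e2, e3, e4]
    linarith
  have hD : ⟪y, Matrix.toEuclideanLin D w⟫ ≤ ‖y‖ * (euclideanOpNorm D * ‖w‖) :=
    (real_inner_le_norm _ _).trans (mul_le_mul_of_nonneg_left
      ((LinearMap.toContinuousLinearMap (Matrix.toEuclideanLin D)).le_opNorm w) (norm_nonneg _))
  have hyoung : 2 * (‖y‖ * (euclideanOpNorm D * ‖w‖)) ≤
      pi * ‖y‖ ^ 2 + euclideanOpNorm D ^ 2 / pi * ‖w‖ ^ 2 := by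
    have h : 0 ≤ (pi * ‖y‖ - euclideanOpNorm D * ‖w‖) ^ 2 / pi := by positivity
    have e : (pi * ‖y‖ - euclideanOpNorm D * ‖w‖) ^ 2 / pi =
        pi * ‖y‖ ^ 2 + euclideanOpNorm D ^ 2 / pi * ‖w‖ ^ 2 -
          2 * (‖y‖ * (euclideanOpNorm D * ‖w‖)) := by
      field_simp
      ring
    linarith
  rw [inner_add_right]
  linarith
end

section
/- Let A (n×N), B (n×m), D (n×σ), J (N×T), U (m×T), W (σ×T), X1 (n×T) be real matrices with X1 = A·J + B·U + D·W. Let P be a symmetric positive definite real n×n matrix, let ℵ : ℝⁿ → (N×n real matrices) and Φ : ℝⁿ → (T×n real matrices) satisfy, for every x ∈ ℝⁿ, J·Φ(x) = ℵ(x)·P⁻¹, and let F : ℝⁿ → ℝᴺ be given by F(x) = ℵ(x)·x. Let π > 0 and κ > 0, and assume that for every x ∈ ℝⁿ the symmetric matrix −κ·P⁻¹ − ((X1 − D·W)·Φ(x) + Φ(x)ᵀ·(X1 − D·W)ᵀ + π·I_n) is positive semidefinite. Define the controller u(x) := U·Φ(x)·P·x and the function V(x) := ⟨x, P·x⟩.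 Then: (i) λ_min(P)·‖x‖² ≤ V(x) ≤ λ_max(P)·‖x‖² for all x ∈ ℝⁿ, where λ_min(P) and λ_max(P) are the smallest and largest eigenvalues of P; and (ii) for all x ∈ ℝⁿ and all w ∈ ℝ^σ, 2·⟨P·x, A·F(x) + B·u(x) + D·w⟩ ≤ −κ·V(x) + (‖D‖²/π)·‖w‖². -/
/-!
For (i), expand `x` in an orthonormal eigenbasis `b` of `P`: `⟪x, P x⟫ = ∑ i, λ i * ⟪b i, x⟫ ^ 2`,
while `‖x‖ ^ 2 = ∑ i, ⟪b i, x⟫ ^ 2`.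

For (ii), put `y = P x` and `G = (X1 - D W) Φ(x)`. The data relation gives `X1 - D W = A J + B U`,
and `J Φ(x) P = ℵ(x)`, so the closed-loop field without adversarial input is exactly `G y`.
Evaluating the matrix inequality at `y` gives `2 ⟪y, G y⟫ ≤ -κ V(x) - π ‖y‖ ^ 2`, because
`⟪y, P⁻¹ y⟫ = V(x)`. Young's inequality `2 ⟪y, D w⟫ ≤ π ‖y‖ ^ 2 + ‖D w‖ ^ 2 / π` absorbs the
remaining term.
-/

open RealInnerProductSpace Matrix

theorem inner_toEuclideanLin_eq_sum {n : ℕ} {P : Matrix (Fin n) (Fin n) ℝ} (hP : P.IsHermitian)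
    (x : EuclideanSpace ℝ (Fin n)) :
    ⟪x, Matrix.toEuclideanLin P x⟫ =
      ∑ i, hP.eigenvalues i * ⟪hP.eigenvectorBasis i, x⟫ ^ 2 := by
  rw [← hP.eigenvectorBasis.sum_inner_mul_inner x (Matrix.toEuclideanLin P x)]
  refine Finset.sum_congr rfl fun i _ => ?_
  have hb : Matrix.toEuclideanLin P (hP.eigenvectorBasis i) =
      hP.eigenvalues i • hP.eigenvectorBasis i := by
    ext j
    exact congrFun (hP.mulVec_eigenvectorBasis i) j
  have hsymm := Matrix.isSymmetric_toEuclideanLin_iff.mpr hP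
  rw [← hsymm (hP.eigenvectorBasis i) x, hb, real_inner_smul_left,
    real_inner_comm (hP.eigenvectorBasis i) x]
  ring

/-- Young's inequality with weight `c`. -/
theorem two_mul_inner_le_young {E : Type*} [NormedAddCommGroup E] [InnerProductSpace ℝ E]
    (y z : E) {c : ℝ} (hc : 0 < c) :
    2 * ⟪y, z⟫ ≤ c * ‖y‖ ^ 2 + ‖z‖ ^ 2 / c := by
  have h : c * ‖y‖ ^ 2 + ‖z‖ ^ 2 / c - 2 * (‖y‖ * ‖z‖) = (c * ‖y‖ - ‖z‖) ^ 2 / c := by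
    field_simp
    ring
  have h0 : 0 ≤ (c * ‖y‖ - ‖z‖) ^ 2 / c := by positivity
  linarith [real_inner_le_norm y z]

theorem inner_toEuclideanLin_eq_dotProduct {n : ℕ} (M : Matrix (Fin n) (Fin n) ℝ)
    (y : EuclideanSpace ℝ (Fin n)) :
    ⟪y, Matrix.toEuclideanLin M y⟫ = y.ofLp ⬝ᵥ (M *ᵥ y.ofLp) := by
  simp [EuclideanSpace.inner_eq_star_dotProduct, Matrix.toLpLin_apply, dotProduct_comm]

/-- Theorem 3.7 (data-driven ISS Lyapunov function): under the data relation
`X1 = A·J + B·U + D·W`, the design conditions `J·Φ(x) = ℵ(x)·P⁻¹` and the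
data-based LMI `(X1 − D·W)Φ(x) + Φ(x)ᵀ(X1 − D·W)ᵀ + pi·I ⪯ −κ·P⁻¹`,
the function `V(x) = ⟨x, Px⟩` satisfies the sandwich bound with the extreme
eigenvalues of `P` and the ISS dissipation inequality for the closed loop
`ẋ = A·F(x) + B·u(x) + D·w` with `u(x) = U·Φ(x)·P·x` and `ρ = ‖D‖²/pi`. -/
theorem data_driven_ISS_Lyapunov
    {n N m σ T : ℕ}
    (A : Matrix (Fin n) (Fin N) ℝ) (B : Matrix (Fin n) (Fin m) ℝ)
    (D : Matrix (Fin n) (Fin σ) ℝ)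
    (J : Matrix (Fin N) (Fin T) ℝ) (U : Matrix (Fin m) (Fin T) ℝ)
    (W : Matrix (Fin σ) (Fin T) ℝ) (X1 : Matrix (Fin n) (Fin T) ℝ)
    (hdata : X1 = A * J + B * U + D * W)
    (P : Matrix (Fin n) (Fin n) ℝ) (hP : P.PosDef)
    (ℵ : EuclideanSpace ℝ (Fin n) → Matrix (Fin N) (Fin n) ℝ)
    (Φ : EuclideanSpace ℝ (Fin n) → Matrix (Fin T) (Fin n) ℝ)
    (hJΦ : ∀ x, J * Φ x = ℵ x * P⁻¹)
    (F : EuclideanSpace ℝ (Fin n) → EuclideanSpace ℝ (Fin N))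
    (hF : ∀ x, F x = Matrix.toEuclideanLin (ℵ x) x)
    (pi κ : ℝ) (hpi : 0 < pi) (hκ : 0 < κ)
    (hLMI : ∀ x, (-(κ • P⁻¹) -
      ((X1 - D * W) * Φ x + (Φ x)ᵀ * (X1 - D * W)ᵀ +
        pi • (1 : Matrix (Fin n) (Fin n) ℝ))).PosSemidef)
    (u : EuclideanSpace ℝ (Fin n) → EuclideanSpace ℝ (Fin m))
    (hu : ∀ x, u x = Matrix.toEuclideanLin (U * Φ x * P) x)
    (V : EuclideanSpace ℝ (Fin n) → ℝ)
    (hV : ∀ x, V x = ⟪x, Matrix.toEuclideanLin P x⟫) :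
    (∀ x : EuclideanSpace ℝ (Fin n),
        (⨅ i, hP.1.eigenvalues i) * ‖x‖ ^ 2 ≤ V x ∧
        V x ≤ (⨆ i, hP.1.eigenvalues i) * ‖x‖ ^ 2) ∧
    (∀ (x : EuclideanSpace ℝ (Fin n)) (w : EuclideanSpace ℝ (Fin σ)),
        2 * ⟪Matrix.toEuclideanLin P x,
              Matrix.toEuclideanLin A (F x) + Matrix.toEuclideanLin B (u x) +
                Matrix.toEuclideanLin D w⟫ ≤
          -κ * V x + euclideanOpNorm D ^ 2 / pi * ‖w‖ ^ 2) := by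
  have hdet : IsUnit P.det := (Matrix.isUnit_iff_isUnit_det P).mp hP.isUnit
  refine ⟨fun x => ?_, fun x w => ?_⟩
  · rw [hV, inner_toEuclideanLin_eq_sum hP.1, ← hP.1.eigenvectorBasis.sum_sq_inner_right x,
      Finset.mul_sum, Finset.mul_sum]
    constructor
    · exact Finset.sum_le_sum fun i _ => mul_le_mul_of_nonneg_right
        (ciInf_le (Set.finite_range _).bddBelow i) (sq_nonneg _)
    · exact Finset.sum_le_sum fun i _ => mul_le_mul_of_nonneg_right
        (le_ciSup (Set.finite_range _).bddAbove i) (sq_nonneg _)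
  · set y := Matrix.toEuclideanLin P x with hy
    have hyP : y.ofLp = P *ᵥ x.ofLp := rfl
    have hX : X1 - D * W = A * J + B * U := by rw [hdata, add_sub_cancel_right]
    -- The closed loop without adversarial input acts as `(X1 - D W) Φ(x)` on `y = P x`.
    have hloop : Matrix.toEuclideanLin A (F x) + Matrix.toEuclideanLin B (u x) =
        Matrix.toEuclideanLin ((X1 - D * W) * Φ x) y := by
      have hℵ : ℵ x = J * Φ x * P := by
        rw [hJΦ, Matrix.nonsing_inv_mul_cancel_right _ _ hdet]
      rw [hF, hu, hX, hℵ]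
      apply (WithLp.ofLp_injective 2)
      simp [hy, Matrix.toLpLin_apply, Matrix.mulVec_mulVec, Matrix.add_mul,
        Matrix.mul_assoc]
    have hVy : V x = y.ofLp ⬝ᵥ (P⁻¹ *ᵥ y.ofLp) := by
      rw [hV, hyP, Matrix.mulVec_mulVec, Matrix.nonsing_inv_mul _ hdet, Matrix.one_mulVec]
      simp [EuclideanSpace.inner_eq_star_dotProduct, Matrix.toLpLin_apply]
    have hnorm : y.ofLp ⬝ᵥ y.ofLp = ‖y‖ ^ 2 := by
      rw [← real_inner_self_eq_norm_sq, EuclideanSpace.inner_eq_star_dotProduct, star_trivial]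
    have hLMIy := (hLMI x).dotProduct_mulVec_nonneg y.ofLp
    rw [← Matrix.transpose_mul] at hLMIy
    have htr : y.ofLp ⬝ᵥ (((X1 - D * W) * Φ x)ᵀ *ᵥ y.ofLp) =
        y.ofLp ⬝ᵥ (((X1 - D * W) * Φ x) *ᵥ y.ofLp) := by
      rw [Matrix.mulVec_transpose, dotProduct_comm, Matrix.dotProduct_mulVec]
    simp only [star_trivial, Matrix.sub_mulVec, Matrix.neg_mulVec, Matrix.add_mulVec,
      Matrix.smul_mulVec, Matrix.one_mulVec, dotProduct_sub, dotProduct_neg, dotProduct_add,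
      dotProduct_smul, smul_eq_mul, htr, hnorm, ← hVy] at hLMIy
    rw [← inner_toEuclideanLin_eq_dotProduct] at hLMIy
    have hDw : ‖Matrix.toEuclideanLin D w‖ ≤ euclideanOpNorm D * ‖w‖ :=
      (LinearMap.toContinuousLinearMap (Matrix.toEuclideanLin D)).le_opNorm w
    have hDw2 : ‖Matrix.toEuclideanLin D w‖ ^ 2 / pi ≤
        euclideanOpNorm D ^ 2 / pi * ‖w‖ ^ 2 := by
      rw [div_mul_eq_mul_div, ← mul_pow]
      gcongr
    have hyoung := two_mul_inner_le_young y (Matrix.toEuclideanLin D w) hpi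
    rw [hloop, inner_add_right]
    linarith
end

section
/- Let M ≥ 1 be a natural number and, for each i ∈ {1,…,M}, let κ_i > 0, α_i > 0, ρ_i ≥ 0 be real constants, v_i ≥ 0 a nonnegative real number, and d_i a real number satisfying d_i ≤ −κ_i·v_i + ρ_i·Σ_{j≠i} v_j/α_j. Suppose there exists μ < 0 such that for every j ∈ {1,…,M}, −κ_j + Σ_{i≠j} ρ_i/α_j ≤ μ. Then Σ_{i=1}^M d_i ≤ μ·Σ_{i=1}^M v_i; equivalently, with κ := −μ > 0, Σ_{i=1}^M d_i ≤ −κ·Σ_{i=1}^M v_i. -/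
/-!
Summing the bounds on `d i` and exchanging the order of summation, the coefficient of `v j` in the
total is exactly the column sum `-κ j + ∑_{i ≠ j} ρ i / α j`. This is at most `μ`, and `v j ≥ 0`,
so the total is at most `μ * ∑ v`.
-/

open Finset

/-- Small-gain compositional inequality (arithmetic core of Theorem 4.1):
if `d i ≤ −κ i·v i + ρ i·Σ_{j≠i} v j / α j` and each column sum
`−κ j + Σ_{i≠j} ρ i / α j` is at most `μ < 0`, then `Σ d ≤ μ·Σ v`. -/
theorem small_gain_sum_bound
    {M : ℕ} (hM : 1 ≤ M)
    (κ α ρ v d : Fin M → ℝ)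
    (hκ : ∀ i, 0 < κ i) (hα : ∀ i, 0 < α i) (hρ : ∀ i, 0 ≤ ρ i)
    (hv : ∀ i, 0 ≤ v i)
    (hd : ∀ i, d i ≤ -(κ i) * v i + ρ i * ∑ j ∈ univ.erase i, v j / α j)
    (μ : ℝ) (hμ : μ < 0)
    (hsg : ∀ j, -(κ j) + ∑ i ∈ univ.erase j, ρ i / α j ≤ μ) :
    ∑ i, d i ≤ μ * ∑ i, v i := by
  -- Exchanging the order of summation turns row sums of the gain matrix into column sums.
  have hswap : ∑ i, ρ i * ∑ j ∈ univ.erase i, v j / α j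
      = ∑ j, (∑ i ∈ univ.erase j, ρ i / α j) * v j := by
    simp_rw [Finset.mul_sum, Finset.sum_mul]
    rw [Finset.sum_comm' (t' := univ) (s' := fun j => univ.erase j)
      (by intro x y; simp [eq_comm])]
    refine Finset.sum_congr rfl fun j _ => Finset.sum_congr rfl fun i _ => ?_
    ring
  calc ∑ i, d i
      ≤ ∑ i, (-(κ i) * v i + ρ i * ∑ j ∈ univ.erase i, v j / α j) :=
        Finset.sum_le_sum fun i _ => hd i
    _ = ∑ j, (-(κ j) + ∑ i ∈ univ.erase j, ρ i / α j) * v j := by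
        rw [Finset.sum_add_distrib, hswap, ← Finset.sum_add_distrib]
        exact Finset.sum_congr rfl fun j _ => (add_mul _ _ _).symm
    _ ≤ ∑ j, μ * v j :=
        Finset.sum_le_sum fun j _ => mul_le_mul_of_nonneg_right (hsg j) (hv j)
    _ = μ * ∑ i, v i := (Finset.mul_sum _ _ _).symm
end

section
/- Let M ≥ 1 and, for each i ∈ {1,…,M}, let n_i be a positive integer, α_i > 0, κ_i > 0, ρ_i ≥ 0 real constants, and V_i : ℝ^{n_i} → ℝ a function with α_i·‖y‖² ≤ V_i(y) for all y ∈ ℝ^{n_i}. Let x_i : ℝ → ℝ^{n_i} be functions such that, for each i, the map t ↦ V_i(x_i(t)) is differentiable with derivative satisfying (d/dt) V_i(x_i(t)) ≤ −κ_i·V_i(x_i(t)) + ρ_i·Σ_{j≠i} ‖x_j(t)‖² for all t. Suppose there exists μ < 0 such that −κ_j + Σ_{i≠j} ρ_i/α_j ≤ μ for every j ∈ {1,…,M}. Then the function t ↦ V(t) := Σ_{i=1}^M V_i(x_i(t)) is differentiable with (d/dt) V(t) ≤ −κ·V(t) for all t, where κ := −μ > 0. -/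
/-!
The lower bound on each `V j` gives `‖x j‖² ≤ V j / αl j`, so the dissipation inequalities form
a linear comparison system in the values `V j` with matrix `-K + ρ̂`, where `ρ̂ i j = ρ i / αl j`
off the diagonal. Summing over `i` and exchanging the sums leaves the column sums of this matrix
as coefficients of the nonnegative numbers `V j`; the small-gain condition bounds each by `μ`.
-/

open Finset

/-- Compositional construction of the network Lyapunov decay (Theorem 4.1):
if each subsystem Lyapunov function satisfies the ISS dissipation inequality
along the network trajectory and the small-gain condition holds with margin
`μ < 0`, then `V = Σ_i V_i(x_i(·))` is differentiable and decays with rate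
`κ = −μ`, i.e. `(d/dt)V(t) ≤ −κ·V(t) = μ·V(t)`. -/
theorem network_CLF_decay
    {M : ℕ} (hM : 1 ≤ M) (n : Fin M → ℕ) (hn : ∀ i, 0 < n i)
    (αl κ ρ : Fin M → ℝ)
    (hαl : ∀ i, 0 < αl i) (hκ : ∀ i, 0 < κ i) (hρ : ∀ i, 0 ≤ ρ i)
    (V : ∀ i : Fin M, EuclideanSpace ℝ (Fin (n i)) → ℝ)
    (hlow : ∀ (i : Fin M) (y : EuclideanSpace ℝ (Fin (n i))),
      αl i * ‖y‖ ^ 2 ≤ V i y)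
    (x : ∀ i : Fin M, ℝ → EuclideanSpace ℝ (Fin (n i)))
    (hdiff : ∀ i, Differentiable ℝ (fun t => V i (x i t)))
    (hderiv : ∀ (i : Fin M) (t : ℝ),
      deriv (fun t => V i (x i t)) t ≤
        -(κ i) * V i (x i t) + ρ i * ∑ j ∈ univ.erase i, ‖x j t‖ ^ 2)
    (μ : ℝ) (hμ : μ < 0)
    (hsg : ∀ j, -(κ j) + ∑ i ∈ univ.erase j, ρ i / αl j ≤ μ) :
    Differentiable ℝ (fun t => ∑ i, V i (x i t)) ∧
    ∀ t : ℝ, deriv (fun t => ∑ i, V i (x i t)) t ≤ μ * ∑ i, V i (x i t) := by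
  refine ⟨Differentiable.fun_sum fun i _ => hdiff i, fun t => ?_⟩
  rw [deriv_fun_sum fun i _ => hdiff i t]
  have hnorm : ∀ j, ‖x j t‖ ^ 2 ≤ V j (x j t) / αl j := fun j => by
    rw [le_div_iff₀ (hαl j), mul_comm]
    exact hlow j (x j t)
  have hV : ∀ j, 0 ≤ V j (x j t) := fun j =>
    (mul_nonneg (hαl j).le (sq_nonneg _)).trans (hlow j (x j t))
  calc ∑ i, deriv (fun t => V i (x i t)) t
      ≤ ∑ i, (-(κ i) * V i (x i t)
          + ∑ j ∈ univ.erase i, ρ i / αl j * V j (x j t)) := by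
        refine sum_le_sum fun i _ => (hderiv i t).trans ?_
        rw [mul_sum]
        refine add_le_add le_rfl (sum_le_sum fun j _ => ?_)
        calc ρ i * ‖x j t‖ ^ 2 ≤ ρ i * (V j (x j t) / αl j) :=
              mul_le_mul_of_nonneg_left (hnorm j) (hρ i)
          _ = ρ i / αl j * V j (x j t) := by ring
    _ = ∑ j, (-(κ j) + ∑ i ∈ univ.erase j, ρ i / αl j) * V j (x j t) := by
        -- Exchange the order of summation over the ordered pairs `i ≠ j`.
        simp_rw [add_mul, sum_mul, sum_add_distrib]
        congr 1
        exact sum_comm' (by simp [eq_comm])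
    _ ≤ ∑ j, μ * V j (x j t) :=
        sum_le_sum fun j _ => mul_le_mul_of_nonneg_right (hsg j) (hV j)
    _ = μ * ∑ i, V i (x i t) := (mul_sum _ _ _).symm
end
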